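/- (Linearity of p₊ on positive excursions, equation (2.41).) Let (z₊, z₋) ∈ 𝒟, let 0 ≤ a < b ≤ ∞, and suppose (z₊ + λ₊)(p₊(a)) = 0 while (z₊ + λ₊)(p₊(s)) > 0 for all s ∈ (a, b). Then p₊(s) = p₊(a) + s − a for every s ∈ [a, b). -/

import Mathlib

open Set Filter

/-- The Skorohod map: `Γ(z)(θ) = max(0, sup_{0 ≤ ν ≤ θ} (−z(ν)))`. -/
noncomputable def skorohod (z : ℝ → ℝ) (θ : ℝ) : ℝ :=
  max 0 (sSup ((fun ν => -z ν) '' Set.Icc 0 θ))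

/-!
While the reflected path `z + Γ(z)` is positive, `Γ(z)` cannot grow. Both `p₊` and `θ ↦ θ - p₊ θ`
are nondecreasing, so `p₊` is `1`-Lipschitz; as `s` runs through the excursion, `p₊ s` sweeps an
interval on which `z₊ + λ₊` is positive, and `λ₊ ∘ p₊` stays at the level `λ₊ (p₊ a)`. If `p₊`
advanced by less than `s - a`, then maximality of `p₊ s` would force `λ₊` above that level
immediately to the right of `p₊ s`, where it is still flat because `z₊ + λ₊` is positive at `p₊ s`.
-/

open Topology

theorem lipschitzOnWith_one_of_monotoneOn_of_monotoneOn_sub {f : ℝ → ℝ} {S : Set ℝ}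
    (hf : MonotoneOn f S) (hsub : MonotoneOn (fun x => x - f x) S) : LipschitzOnWith 1 f S := by
  refine LipschitzOnWith.of_le_add fun x hx y hy => ?_
  rw [Real.dist_eq]
  rcases le_total x y with hxy | hyx
  · exact (hf hx hy hxy).trans (le_add_of_nonneg_right (abs_nonneg _))
  · have hgap : y - f y ≤ x - f x := hsub hy hx hyx
    linarith [le_abs_self (x - y)]

section Skorohod

variable {z : ℝ → ℝ} {u v : ℝ}

theorem skorohod_nonneg (z : ℝ → ℝ) (θ : ℝ) : 0 ≤ skorohod z θ :=
  le_max_left _ _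

theorem bddAbove_image_neg_Icc (hz : LowerSemicontinuousOn z (Ici 0)) (θ : ℝ) :
    BddAbove ((fun ν => -z ν) '' Icc 0 θ) := by
  obtain ⟨m, hm⟩ := (hz.mono Icc_subset_Ici_self).bddBelow_of_isCompact (isCompact_Icc (b := θ))
  exact ⟨-m, forall_mem_image.2 fun ν hν => neg_le_neg (hm (mem_image_of_mem z hν))⟩

theorem neg_le_skorohod (hz : LowerSemicontinuousOn z (Ici 0)) (hu : 0 ≤ u) (huv : u ≤ v) :
    -z u ≤ skorohod z v :=
  (le_csSup (bddAbove_image_neg_Icc hz v) (mem_image_of_mem _ ⟨hu, huv⟩)).trans (le_max_right _ _)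

theorem skorohod_monotoneOn (hz : LowerSemicontinuousOn z (Ici 0)) :
    MonotoneOn (skorohod z) (Ici 0) := fun _ hu v _ huv =>
  max_le_max_left 0 <| csSup_le_csSup (bddAbove_image_neg_Icc hz v)
    ((nonempty_Icc.2 hu).image _) (image_mono (Icc_subset_Icc_right huv))

theorem exists_neg_eq_skorohod_of_pos (hz : LowerSemicontinuousOn z (Ici 0)) (hu : 0 ≤ u)
    (hpos : 0 < skorohod z u) : ∃ ν ∈ Icc 0 u, -z ν = skorohod z u := by
  obtain ⟨ν, hν, hmin⟩ :=
    (hz.mono Icc_subset_Ici_self).exists_isMinOn (nonempty_Icc.2 hu) isCompact_Icc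
  have hsup : sSup ((fun x => -z x) '' Icc 0 u) = -z ν :=
    IsGreatest.csSup_eq ⟨mem_image_of_mem _ hν, forall_mem_image.2 fun _ hx => neg_le_neg (hmin hx)⟩
  refine ⟨ν, hν, ?_⟩
  unfold skorohod at hpos ⊢
  rw [hsup] at hpos ⊢
  exact (max_eq_right_of_lt ((lt_max_iff.1 hpos).resolve_left (lt_irrefl 0))).symm

theorem skorohod_eq_of_reflected_pos (hz : LowerSemicontinuousOn z (Ici 0)) (hu : 0 ≤ u)
    (huv : u ≤ v) (hpos : ∀ x ∈ Ioc u v, 0 < z x + skorohod z x) :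
    skorohod z v = skorohod z u := by
  have hv : 0 ≤ v := hu.trans huv
  refine le_antisymm ?_ (skorohod_monotoneOn hz hu hv huv)
  by_contra! hlt
  obtain ⟨x, ⟨hx, hxv⟩, hattain⟩ :=
    exists_neg_eq_skorohod_of_pos hz hv ((skorohod_nonneg z u).trans_lt hlt)
  have hux : u < x := by
    by_contra! hxu
    exact hlt.not_ge (hattain ▸ neg_le_skorohod hz hx hxu)
  linarith [hpos x ⟨hux, hxv⟩, skorohod_monotoneOn hz hx hv hxv]

theorem eventually_skorohod_eq_of_reflected_pos (hz : LowerSemicontinuousOn z (Ici 0))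
    (hu : 0 ≤ u) (hpos : 0 < z u + skorohod z u) :
    ∀ᶠ v in 𝓝[>] u, skorohod z v = skorohod z u := by
  have hnear : ∀ᶠ x in 𝓝[>] u, -skorohod z u < z x :=
    (hz u hu _ (by linarith)).filter_mono (nhdsWithin_mono u fun x hx => hu.trans (le_of_lt hx))
  obtain ⟨w, huw, hw⟩ := mem_nhdsGT_iff_exists_Ioo_subset.1 hnear
  filter_upwards [Ioo_mem_nhdsGT huw] with v hv
  refine skorohod_eq_of_reflected_pos hz hu hv.1.le fun x hx => ?_
  have hzx : -skorohod z u < z x := hw ⟨hx.1, hx.2.trans_lt hv.2⟩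
  linarith [skorohod_monotoneOn hz hu (hu.trans hx.1.le) hx.1.le]

end Skorohod

/-- `p θ` is the last time `ν ∈ [0, θ]` at which `L ν` meets the time-reversed `M (θ - ν)`. With
`L = λ₊` and `M = λ₋` this characterises `p₊`; stating it as a predicate on `p` builds the
existence of the maximum into the hypothesis. -/
def IsLastCrossing {α : Type*} (L M : ℝ → α) (p : ℝ → ℝ) : Prop :=
  ∀ θ ∈ Ici (0 : ℝ), IsGreatest {ν ∈ Icc 0 θ | L ν = M (θ - ν)} (p θ)

namespace IsLastCrossing

variable {α : Type*} {L M : ℝ → α} {p : ℝ → ℝ} {θ ν a s : ℝ}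

theorem nonneg (h : IsLastCrossing L M p) (hθ : 0 ≤ θ) : 0 ≤ p θ :=
  (h θ hθ).1.1.1

theorem le_self (h : IsLastCrossing L M p) (hθ : 0 ≤ θ) : p θ ≤ θ :=
  (h θ hθ).1.1.2

theorem apply_eq (h : IsLastCrossing L M p) (hθ : 0 ≤ θ) : L (p θ) = M (θ - p θ) :=
  (h θ hθ).1.2

variable [PartialOrder α]

theorem lt_apply (h : IsLastCrossing L M p) (hL : MonotoneOn L (Ici 0))
    (hM : MonotoneOn M (Ici 0)) (hθ : 0 ≤ θ) (hpν : p θ < ν) (hνθ : ν ≤ θ) :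
    M (θ - ν) < L ν := by
  have hp : 0 ≤ p θ := h.nonneg hθ
  have hν : 0 ≤ ν := hp.trans hpν.le
  have hle : M (θ - ν) ≤ L ν := calc
    M (θ - ν) ≤ M (θ - p θ) :=
      hM (sub_nonneg.2 hνθ) (sub_nonneg.2 (h.le_self hθ)) (sub_le_sub_left hpν.le θ)
    _ = L (p θ) := (h.apply_eq hθ).symm
    _ ≤ L ν := hL hp hν hpν.le
  exact hle.lt_of_ne fun heq => hpν.not_ge ((h θ hθ).2 ⟨⟨hν, hνθ⟩, heq.symm⟩)

theorem monotoneOn (h : IsLastCrossing L M p) (hL : MonotoneOn L (Ici 0))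
    (hM : MonotoneOn M (Ici 0)) : MonotoneOn p (Ici 0) := by
  intro u hu t ht hut
  by_contra! hlt
  have hpu : p u ≤ u := h.le_self hu
  have hcross : M (t - p u) < M (u - p u) :=
    h.apply_eq hu ▸ h.lt_apply hL hM ht hlt (hpu.trans hut)
  exact hcross.not_ge <|
    hM (sub_nonneg.2 hpu) (sub_nonneg.2 (hpu.trans hut)) (sub_le_sub_right hut _)

theorem monotoneOn_sub (h : IsLastCrossing L M p) (hL : MonotoneOn L (Ici 0))
    (hM : MonotoneOn M (Ici 0)) : MonotoneOn (fun θ => θ - p θ) (Ici 0) := by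
  intro u hu t ht hut
  by_contra! hlt
  have hpu : 0 ≤ p u := h.nonneg hu
  have hpt : p t ≤ t := h.le_self ht
  set ν := u - (t - p t) with hν
  have hpν : p u < ν := by linarith
  have hcross : M (u - ν) < L ν := h.lt_apply hL hM hu hpν (by linarith)
  rw [hν, sub_sub_cancel, ← h.apply_eq ht] at hcross
  exact hcross.not_ge (hL (hpu.trans hpν.le) (h.nonneg ht) (by linarith))

theorem continuousOn (h : IsLastCrossing L M p) (hL : MonotoneOn L (Ici 0))
    (hM : MonotoneOn M (Ici 0)) : ContinuousOn p (Ici 0) :=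
  (lipschitzOnWith_one_of_monotoneOn_of_monotoneOn_sub (h.monotoneOn hL hM)
    (h.monotoneOn_sub hL hM)).continuousOn

theorem apply_lt_of_mem_Ioc (h : IsLastCrossing L M p) (hL : MonotoneOn L (Ici 0))
    (hM : MonotoneOn M (Ici 0)) (ha : 0 ≤ a) (hs : 0 ≤ s)
    (hν : ν ∈ Ioc (p s) (p a + s - a)) : L (p a) < L ν := by
  have hpa : p a ≤ a := h.le_self ha
  have hνs : ν ≤ s := by linarith [hν.2]
  calc
    L (p a) = M (a - p a) := h.apply_eq ha
    _ ≤ M (s - ν) := hM (sub_nonneg.2 hpa) (sub_nonneg.2 hνs) (by linarith [hν.2])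
    _ < L ν := h.lt_apply hL hM hs hν.1 hνs

theorem skorohod_apply_eq {z M : ℝ → ℝ} (h : IsLastCrossing (skorohod z) M p)
    (hz : LowerSemicontinuousOn z (Ici 0)) (hM : MonotoneOn M (Ici 0)) (ha : 0 ≤ a) (has : a ≤ s)
    (hpos : ∀ t ∈ Ioc a s, 0 < z (p t) + skorohod z (p t)) :
    skorohod z (p s) = skorohod z (p a) := by
  have hL : MonotoneOn (skorohod z) (Ici 0) := skorohod_monotoneOn hz
  have hcont : ContinuousOn p (Icc a s) :=
    (h.continuousOn hL hM).mono (Icc_subset_Ici_self.trans (Ici_subset_Ici.2 ha))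
  refine skorohod_eq_of_reflected_pos hz (h.nonneg ha)
    (h.monotoneOn hL hM ha (ha.trans has) has) fun x hx => ?_
  obtain ⟨t, ht, rfl⟩ := intermediate_value_Ioc has hcont hx
  exact hpos t ht

end IsLastCrossing

theorem pplus_linear_on_excursions_general {z M p : ℝ → ℝ} {a s : ℝ}
    (hz : LowerSemicontinuousOn z (Ici 0)) (hM : MonotoneOn M (Ici 0))
    (hp : IsLastCrossing (skorohod z) M p) (ha : 0 ≤ a) (has : a ≤ s)
    (hpos : ∀ t ∈ Ioc a s, 0 < z (p t) + skorohod z (p t)) :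
    p s = p a + s - a := by
  rcases has.eq_or_lt with rfl | has_lt
  · exact (add_sub_cancel_right _ _).symm
  have hs : 0 ≤ s := ha.trans has
  have hL : MonotoneOn (skorohod z) (Ici 0) := skorohod_monotoneOn hz
  have hlevel : skorohod z (p s) = skorohod z (p a) := hp.skorohod_apply_eq hz hM ha has hpos
  have hgap : a - p a ≤ s - p s := hp.monotoneOn_sub hL hM ha hs has
  refine le_antisymm (by linarith) ?_
  by_contra! hlt
  have hflat : ∀ᶠ ν in 𝓝[>] p s, skorohod z ν = skorohod z (p s) :=
    eventually_skorohod_eq_of_reflected_pos hz (hp.nonneg hs) (hpos s ⟨has_lt, le_rfl⟩)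
  obtain ⟨ν, hν, hνmem⟩ := (hflat.and (Ioc_mem_nhdsGT hlt)).exists
  exact (hp.apply_lt_of_mem_Ioc hL hM ha hs hνmem).ne' (hν.trans hlevel)

/-- Linearity of `p₊` on positive excursions (equation (2.41)): if
`(z₊ + λ₊)(p₊(a)) = 0` and `(z₊ + λ₊)(p₊(s)) > 0` for all `s ∈ (a, b)`
(where `0 ≤ a < b ≤ ∞`, with `b` an extended real), then
`p₊(s) = p₊(a) + s − a` for all `s ∈ [a, b)`. -/
theorem pplus_linear_on_excursions
    (zp zm : ℝ → ℝ)
    (hzp : ContinuousOn zp (Set.Ici 0)) (hzm : ContinuousOn zm (Set.Ici 0))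
    (hzp0 : zp 0 = 0) (hzm0 : zm 0 = 0)
    (hzpinf : Filter.liminf (fun θ => (zp θ : EReal)) Filter.atTop = ⊥)
    (hzminf : Filter.liminf (fun θ => (zm θ : EReal)) Filter.atTop = ⊥)
    (pp pm : ℝ → ℝ)
    (hpp : ∀ θ ∈ Set.Ici (0:ℝ),
      IsGreatest {ν ∈ Set.Icc 0 θ | skorohod zp ν = skorohod zm (θ - ν)} (pp θ))
    (hpm : ∀ θ ∈ Set.Ici (0:ℝ),
      IsLeast {ν ∈ Set.Icc 0 θ | skorohod zm ν = skorohod zp (θ - ν)} (pm θ))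
    (a : ℝ) (b : EReal) (ha : 0 ≤ a) (hab : (a : EReal) < b)
    (hstart : zp (pp a) + skorohod zp (pp a) = 0)
    (hpos : ∀ s : ℝ, a < s → (s : EReal) < b →
      0 < zp (pp s) + skorohod zp (pp s)) :
    ∀ s : ℝ, a ≤ s → (s : EReal) < b → pp s = pp a + s - a := by
  intro s has hsb
  exact pplus_linear_on_excursions_general hzp.lowerSemicontinuousOn
    (skorohod_monotoneOn hzm.lowerSemicontinuousOn) hpp ha has
    fun t ht => hpos t ht.1 ((EReal.coe_le_coe_iff.2 ht.2).trans_lt hsb)
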